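/- arXiv:1601.06551 — 4 statements merged into one kernel-verified Lean document; each statement's English description precedes it below -/
import Mathlib

section
/- For every fixed parameter vector θ, the influence spread is a submodular set function of the seed set: for all S ⊆ T ⊆ V and every node v ∈ V, σ_θ(S ∪ {v}) − σ_θ(S) ≥ σ_θ(T ∪ {v}) − σ_θ(T). -/
/-!
The spread is a nonnegative combination, over live-edge graphs `L`, of the coverage functions
`S ↦ |R_L(S)|`. In each `L` the gain from adding `v` to `S` is `|R_L({v}) \ R_L(S)|`
(`card_reachSet_insert`), which can only shrink as `S`, and with it `R_L(S)`, grows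
(`reachSet_mono`). The weights are nonnegative because every `θ e` lies in `[0, 1]`
(`liveProb_nonneg`), so the inequality survives averaging.
-/

noncomputable def reachSet {V : Type*} [Fintype V] [DecidableEq V]
    (L : Finset (V × V)) (S : Finset V) : Finset V :=
  @Finset.filter V
    (fun v => ∃ s ∈ S, Relation.ReflTransGen (fun a b : V => (a, b) ∈ L) s v)
    (fun _ => Classical.propDecidable _) Finset.univ

noncomputable def liveProb {V : Type*} [DecidableEq V]
    (E : Finset (V × V)) (θ : V × V → ℝ) (L : Finset (V × V)) : ℝ :=
  (∏ e ∈ L, θ e) * ∏ e ∈ E \ L, (1 - θ e)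

noncomputable def spread {V : Type*} [Fintype V] [DecidableEq V]
    (E : Finset (V × V)) (θ : V × V → ℝ) (S : Finset V) : ℝ :=
  ∑ L ∈ E.powerset, liveProb E θ L * (reachSet L S).card

noncomputable def OPT {V : Type*} [Fintype V] [DecidableEq V]
    (E : Finset (V × V)) (θ : V × V → ℝ) (k : ℕ) : ℝ :=
  sSup {x : ℝ | ∃ T : Finset V, T.card = k ∧ x = spread E θ T}

noncomputable def robustRatio {V : Type*} [Fintype V] [DecidableEq V]
    (E : Finset (V × V)) (l r : V × V → ℝ) (k : ℕ) (S : Finset V) : ℝ :=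
  sInf {x : ℝ | ∃ θ : V × V → ℝ, (∀ e ∈ E, l e ≤ θ e ∧ θ e ≤ r e) ∧
    x = spread E θ S / OPT E θ k}

theorem mem_reachSet {V : Type*} [Fintype V] [DecidableEq V]
    {L : Finset (V × V)} {S : Finset V} {u : V} :
    u ∈ reachSet L S ↔
      ∃ s ∈ S, Relation.ReflTransGen (fun a b : V => (a, b) ∈ L) s u := by
  simp [reachSet]

theorem reachSet_mono {V : Type*} [Fintype V] [DecidableEq V]
    (L : Finset (V × V)) {S T : Finset V} (h : S ⊆ T) :
    reachSet L S ⊆ reachSet L T := by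
  intro u hu
  obtain ⟨s, hs, hr⟩ := mem_reachSet.1 hu
  exact mem_reachSet.2 ⟨s, h hs, hr⟩

/-- For a fixed live-edge graph, reachability is a coverage function: the nodes gained by adding
`v` to `S` are those reachable from `v` that `S` does not already reach. -/
theorem reachSet_insert {V : Type*} [Fintype V] [DecidableEq V]
    (L : Finset (V × V)) (S : Finset V) (v : V) :
    reachSet L (insert v S) = (reachSet L {v} \ reachSet L S) ∪ reachSet L S := by
  ext u
  simp [mem_reachSet]

theorem card_reachSet_insert {V : Type*} [Fintype V] [DecidableEq V]
    (L : Finset (V × V)) (S : Finset V) (v : V) :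
    (reachSet L (insert v S)).card =
      (reachSet L {v} \ reachSet L S).card + (reachSet L S).card := by
  rw [reachSet_insert, Finset.card_union_of_disjoint Finset.sdiff_disjoint]

theorem liveProb_nonneg {V : Type*} [DecidableEq V]
    {E : Finset (V × V)} {θ : V × V → ℝ} (hθ : ∀ e ∈ E, 0 ≤ θ e ∧ θ e ≤ 1)
    {L : Finset (V × V)} (hL : L ⊆ E) : 0 ≤ liveProb E θ L :=
  mul_nonneg (Finset.prod_nonneg fun e he => (hθ e (hL he)).1)
    (Finset.prod_nonneg fun e he => sub_nonneg.2 (hθ e (Finset.mem_sdiff.1 he).1).2)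

/-- The marginal gain of `v` is the expected number of nodes reachable from `v` but not from `S`. -/
theorem spread_insert_sub {V : Type*} [Fintype V] [DecidableEq V]
    (E : Finset (V × V)) (θ : V × V → ℝ) (S : Finset V) (v : V) :
    spread E θ (insert v S) - spread E θ S =
      ∑ L ∈ E.powerset, liveProb E θ L * (reachSet L {v} \ reachSet L S).card := by
  simp only [spread, ← Finset.sum_sub_distrib]
  refine Finset.sum_congr rfl fun L _ => ?_
  rw [card_reachSet_insert]
  push_cast
  ring

/-- For every fixed parameter vector `θ`, the influence spread is a
submodular set function of the seed set: for all `S ⊆ T ⊆ V` and every `v ∈ V`,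
`σ_θ(S ∪ {v}) − σ_θ(S) ≥ σ_θ(T ∪ {v}) − σ_θ(T)`. -/
theorem spread_submodular {V : Type*} [Fintype V] [DecidableEq V]
    (E : Finset (V × V)) (θ : V × V → ℝ)
    (hθ : ∀ e ∈ E, 0 ≤ θ e ∧ θ e ≤ 1)
    (S T : Finset V) (hST : S ⊆ T) (v : V) :
    spread E θ (insert v T) - spread E θ T ≤
      spread E θ (insert v S) - spread E θ S := by
  rw [spread_insert_sub, spread_insert_sub]
  refine Finset.sum_le_sum fun L hL => ?_
  refine mul_le_mul_of_nonneg_left ?_ (liveProb_nonneg hθ (Finset.mem_powerset.1 hL))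
  exact_mod_cast Finset.card_le_card
    (Finset.sdiff_subset_sdiff subset_rfl (reachSet_mono L hST))
end

section
/- (Lemma 4, additive stability of influence spread.) Let θ₁ and θ₂ be parameter vectors with |θ₁ₑ − θ₂ₑ| ≤ δ for every edge e ∈ E (i.e., ‖θ₁ − θ₂‖_∞ ≤ δ). Then for every seed set S ⊆ V, |σ_{θ₁}(S) − σ_{θ₂}(S)| ≤ m·n·δ, where n = |V| and m = |E|. -/
/-- Conditioning on whether the edge `e` is live. -/
lemma sum_liveProb_insert {V : Type*} [DecidableEq V] (θ : V × V → ℝ)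
    {e : V × V} {E : Finset (V × V)} (he : e ∉ E) (f : Finset (V × V) → ℝ) :
    ∑ L ∈ (insert e E).powerset, liveProb (insert e E) θ L * f L =
      θ e * ∑ L ∈ E.powerset, liveProb E θ L * f (insert e L) +
        (1 - θ e) * ∑ L ∈ E.powerset, liveProb E θ L * f L := by
  rw [Finset.sum_powerset_insert he, add_comm, Finset.mul_sum, Finset.mul_sum]
  congr 1
  · refine Finset.sum_congr rfl fun L hL => ?_
    have heL : e ∉ L := fun h => he (Finset.mem_powerset.1 hL h)
    have hdiff : insert e E \ insert e L = E \ L := by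
      ext x
      simp only [Finset.mem_sdiff, Finset.mem_insert]
      grind
    rw [liveProb, liveProb, Finset.prod_insert heL, hdiff]
    ring
  · refine Finset.sum_congr rfl fun L hL => ?_
    have heL : e ∉ L := fun h => he (Finset.mem_powerset.1 hL h)
    have he' : e ∉ E \ L := fun h => he (Finset.mem_sdiff.1 h).1
    rw [liveProb, liveProb, Finset.insert_sdiff_of_notMem _ heL, Finset.prod_insert he']
    ring

/-- The expectation of a function with values in `[0, N]` lies in `[0, N]`. -/
lemma sum_liveProb_mem {V : Type*} [DecidableEq V] (θ : V × V → ℝ) (N : ℝ)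
    (E : Finset (V × V)) (h : ∀ e ∈ E, 0 ≤ θ e ∧ θ e ≤ 1) (f : Finset (V × V) → ℝ)
    (hf : ∀ L, 0 ≤ f L ∧ f L ≤ N) :
    0 ≤ ∑ L ∈ E.powerset, liveProb E θ L * f L ∧
      ∑ L ∈ E.powerset, liveProb E θ L * f L ≤ N := by
  induction E using Finset.induction_on generalizing f with
  | empty => simpa [liveProb] using hf ∅
  | insert e E he ih =>
    rw [sum_liveProb_insert θ he]
    have hE := fun x hx => h x (Finset.mem_insert_of_mem hx)
    obtain ⟨ha0, haN⟩ := ih hE (fun L => f (insert e L)) fun L => hf _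
    obtain ⟨hb0, hbN⟩ := ih hE f hf
    obtain ⟨ht0, ht1⟩ := h e (Finset.mem_insert_self e E)
    constructor
    · exact add_nonneg (mul_nonneg ht0 ha0) (mul_nonneg (sub_nonneg.2 ht1) hb0)
    · linarith [mul_le_mul_of_nonneg_left haN ht0,
        mul_le_mul_of_nonneg_left hbN (sub_nonneg.2 ht1)]

/-- Stability of the expectation of an arbitrary function with values in `[0, N]`. Allowing every
such `f`, rather than only reachability counts, makes the induction on `E` go through, since
conditioning on `e` being live replaces `f` by `f ∘ insert e`. -/
lemma abs_sum_liveProb_sub_le {V : Type*} [DecidableEq V] (θ₁ θ₂ : V × V → ℝ) (N δ : ℝ)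
    (E : Finset (V × V)) (h₁ : ∀ e ∈ E, 0 ≤ θ₁ e ∧ θ₁ e ≤ 1)
    (h₂ : ∀ e ∈ E, 0 ≤ θ₂ e ∧ θ₂ e ≤ 1) (hδ : ∀ e ∈ E, |θ₁ e - θ₂ e| ≤ δ)
    (f : Finset (V × V) → ℝ) (hf : ∀ L, 0 ≤ f L ∧ f L ≤ N) :
    |∑ L ∈ E.powerset, liveProb E θ₁ L * f L - ∑ L ∈ E.powerset, liveProb E θ₂ L * f L| ≤
      E.card * N * δ := by
  induction E using Finset.induction_on generalizing f with
  | empty => simp [liveProb]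
  | insert e E he ih =>
    have hE₁ := fun x hx => h₁ x (Finset.mem_insert_of_mem hx)
    have hE₂ := fun x hx => h₂ x (Finset.mem_insert_of_mem hx)
    have hEδ := fun x hx => hδ x (Finset.mem_insert_of_mem hx)
    have hfe : ∀ L, 0 ≤ f (insert e L) ∧ f (insert e L) ≤ N := fun L => hf _
    have ha := ih hE₁ hE₂ hEδ _ hfe
    have hb := ih hE₁ hE₂ hEδ f hf
    obtain ⟨ha0, haN⟩ := sum_liveProb_mem θ₂ N E hE₂ _ hfe
    obtain ⟨hb0, hbN⟩ := sum_liveProb_mem θ₂ N E hE₂ f hf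
    obtain ⟨ht0, ht1⟩ := h₁ e (Finset.mem_insert_self e E)
    have ht := hδ e (Finset.mem_insert_self e E)
    rw [sum_liveProb_insert θ₁ he, sum_liveProb_insert θ₂ he, Finset.card_insert_of_notMem he]
    generalize ∑ L ∈ E.powerset, liveProb E θ₁ L * f (insert e L) = a₁ at *
    generalize ∑ L ∈ E.powerset, liveProb E θ₂ L * f (insert e L) = a₂ at *
    generalize ∑ L ∈ E.powerset, liveProb E θ₁ L * f L = b₁ at *
    generalize ∑ L ∈ E.powerset, liveProb E θ₂ L * f L = b₂ at *
    have hab : |a₂ - b₂| ≤ N := abs_le.2 ⟨by linarith, by linarith⟩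
    have hlast : |(θ₁ e - θ₂ e) * (a₂ - b₂)| ≤ δ * N := by
      rw [abs_mul]
      exact mul_le_mul ht hab (abs_nonneg _) ((abs_nonneg _).trans ht)
    rw [abs_le] at ha hb hlast ⊢
    have hs0 := sub_nonneg.2 ht1
    push_cast
    constructor
    · linarith [mul_le_mul_of_nonneg_left ha.1 ht0, mul_le_mul_of_nonneg_left hb.1 hs0]
    · linarith [mul_le_mul_of_nonneg_left ha.2 ht0, mul_le_mul_of_nonneg_left hb.2 hs0]

/-- Lemma 4, additive stability: if `|θ₁ e − θ₂ e| ≤ δ` for every edge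
`e ∈ E`, then `|σ_{θ₁}(S) − σ_{θ₂}(S)| ≤ m·n·δ` for every seed set `S`. -/
theorem spread_additive_stability {V : Type*} [Fintype V] [DecidableEq V]
    (E : Finset (V × V)) (n m : ℕ) (hn : n = Fintype.card V) (hm : m = E.card)
    (θ₁ θ₂ : V × V → ℝ)
    (h₁ : ∀ e ∈ E, 0 ≤ θ₁ e ∧ θ₁ e ≤ 1)
    (h₂ : ∀ e ∈ E, 0 ≤ θ₂ e ∧ θ₂ e ≤ 1)
    (δ : ℝ) (hδ : ∀ e ∈ E, |θ₁ e - θ₂ e| ≤ δ)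
    (S : Finset V) :
    |spread E θ₁ S - spread E θ₂ S| ≤ m * n * δ := by
  subst hn hm
  exact abs_sum_liveProb_sub_le θ₁ θ₂ _ δ E h₁ h₂ hδ (fun L => ((reachSet L S).card : ℝ))
    fun L => ⟨Nat.cast_nonneg _, Nat.cast_le.2 (Finset.card_le_univ _)⟩
end

section
/- (Example 1, disjoint stars.) Let t ≥ 0 and k ≥ 1, and let G=(V,E) be the disjoint union of 2k out-stars: for i = 1,…,2k, star i has a center c_i, leaves v_i^2,…,v_i^{t+1}, and the t directed edges from c_i to each of its leaves; stars are pairwise disconnected. Let 0 ≤ l ≤ r ≤ 1 and Θ = ×_{e∈E}[l,r]. Then the set S = {c_1,…,c_k} of k star centers satisfies g(Θ,S) = (1+t·l)/(1+t·r), and this is optimal: max_{S'⊆V, |S'|=k} g(Θ,S') = (1+t·l)/(1+t·r). -/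
/-! ### Live-edge probabilities -/

section Live

variable {V : Type*} [DecidableEq V] (E : Finset (V × V)) (θ : V × V → ℝ)

lemma sum_liveProb : ∑ L ∈ E.powerset, liveProb E θ L = 1 := by
  simp only [liveProb]
  rw [← Finset.prod_add]
  simp

lemma sum_liveProb_mem_s11 (e : V × V) (he : e ∈ E) :
    ∑ L ∈ E.powerset, liveProb E θ L * (if e ∈ L then 1 else 0) = θ e := by
  -- Expand `∏ (θ + g)` where `g` agrees with `1 - θ` but vanishes at `e`: only the terms with
  -- `e ∈ L` survive.
  have h := Finset.prod_add θ (fun a => if a = e then 0 else 1 - θ a) E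
  have h2 : ∏ a ∈ E, (θ a + (if a = e then 0 else 1 - θ a)) = θ e := by
    rw [Finset.prod_eq_single_of_mem e he]
    · simp
    · intro b _ hb
      simp [hb]
  rw [← h2, h]
  refine Finset.sum_congr rfl fun L _ => ?_
  rw [liveProb]
  by_cases heL : e ∈ L
  · rw [if_pos heL, mul_one]
    congr 1
    refine Finset.prod_congr rfl fun a ha => ?_
    rw [if_neg]
    rintro rfl
    exact (Finset.mem_sdiff.1 ha).2 heL
  · have h0 : ∏ a ∈ E \ L, (if a = e then 0 else 1 - θ a) = 0 :=
      Finset.prod_eq_zero (Finset.mem_sdiff.2 ⟨he, heL⟩) (if_pos rfl)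
    rw [if_neg heL, h0, mul_zero, mul_zero]

end Live

/-! ### Influence spread on disjoint stars -/

section Stars

variable {n t : ℕ}

/-- The edges of `n` disjoint out-stars with `t` leaves each: from the center `(i, 0)` to the
leaves `(i, j)`, `j ≠ 0`. -/
def starEdges (n t : ℕ) : Finset ((Fin n × Fin (t + 1)) × (Fin n × Fin (t + 1))) :=
  Finset.univ.filter (fun e => e.1.2 = 0 ∧ e.2.2 ≠ 0 ∧ e.2.1 = e.1.1)

lemma mem_starEdges {e : (Fin n × Fin (t + 1)) × (Fin n × Fin (t + 1))} :
    e ∈ starEdges n t ↔ e.1.2 = 0 ∧ e.2.2 ≠ 0 ∧ e.2.1 = e.1.1 := by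
  simp [starEdges]

/-- Every live path in a star has length at most one, since edges end at leaves, which have no
outgoing edges. -/
lemma mem_reachSet_s11 {L : Finset ((Fin n × Fin (t + 1)) × (Fin n × Fin (t + 1)))}
    (hL : L ⊆ starEdges n t) (T : Finset (Fin n × Fin (t + 1))) (v : Fin n × Fin (t + 1)) :
    v ∈ reachSet L T ↔ v ∈ T ∨ ((v.2 ≠ 0 ∧ (v.1, 0) ∈ T) ∧ ((v.1, 0), v) ∈ L) := by
  simp only [reachSet, Finset.mem_filter, Finset.mem_univ, true_and]
  constructor
  · rintro ⟨s, hs, h⟩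
    rcases Relation.ReflTransGen.cases_tail h with h | ⟨c, h, hc⟩
    · exact Or.inl (h ▸ hs)
    · right
      have h1 := mem_starEdges.1 (hL hc)
      have hcv : c = (v.1, 0) := Prod.ext h1.2.2.symm h1.1
      rcases Relation.ReflTransGen.cases_tail h with h' | ⟨d, _, hd⟩
      · subst hcv
        exact ⟨⟨h1.2.1, h' ▸ hs⟩, hc⟩
      · exact absurd h1.1 (mem_starEdges.1 (hL hd)).2.1
  · rintro (h | ⟨⟨_, h⟩, he⟩)
    · exact ⟨v, h, .refl⟩
    · exact ⟨_, h, .single he⟩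

/-- Linearity of expectation: the spread is the sum over nodes of the activation probability. -/
lemma spread_eq (θ : (Fin n × Fin (t + 1)) × (Fin n × Fin (t + 1)) → ℝ)
    (T : Finset (Fin n × Fin (t + 1))) :
    spread (starEdges n t) θ T = ∑ v : Fin n × Fin (t + 1),
      if v ∈ T then 1 else if v.2 ≠ 0 ∧ (v.1, 0) ∈ T then θ ((v.1, 0), v) else 0 := by
  have h1 : spread (starEdges n t) θ T = ∑ L ∈ (starEdges n t).powerset,
      ∑ v : Fin n × Fin (t + 1), liveProb (starEdges n t) θ L *
        (if v ∈ T ∨ ((v.2 ≠ 0 ∧ (v.1, 0) ∈ T) ∧ ((v.1, 0), v) ∈ L) then 1 else 0) := by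
    refine Finset.sum_congr rfl fun L hL => ?_
    rw [← Finset.mul_sum, Finset.sum_boole]
    congr 3
    ext v
    simp only [mem_reachSet_s11 (Finset.mem_powerset.1 hL), Finset.mem_filter, Finset.mem_univ,
      true_and]
  rw [h1, Finset.sum_comm]
  refine Finset.sum_congr rfl fun v _ => ?_
  by_cases hv : v ∈ T
  · simp [hv, sum_liveProb]
  by_cases hc : v.2 ≠ 0 ∧ (v.1, 0) ∈ T
  · simp only [hv, hc, false_or, true_and, if_false, if_true, ne_eq, not_false_eq_true]
    exact sum_liveProb_mem_s11 _ _ _ (mem_starEdges.2 ⟨rfl, hc.1, rfl⟩)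
  · rw [if_neg hv, if_neg hc]
    simp only [hv, hc, false_or, false_and, if_false, mul_zero, Finset.sum_const_zero]

/-- The weight sum compared with the spread: seeds have weight `1`, leaves of seeded centers add
weight `b`, whether seeded themselves or not. -/
lemma sum_weights (T : Finset (Fin n × Fin (t + 1))) (b : ℝ) :
    (∑ v : Fin n × Fin (t + 1), ((if v ∈ T then 1 else 0) +
      (if v.2 ≠ 0 ∧ (v.1, 0) ∈ T then b else 0))) =
    T.card + (Finset.univ.filter fun i : Fin n => (i, (0 : Fin (t + 1))) ∈ T).card * (t * b) := by
  rw [Finset.sum_add_distrib]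
  congr 1
  · simp
  · rw [Fintype.sum_prod_type]
    simp only [Fin.sum_univ_succ, ne_eq, Fin.succ_ne_zero, not_true_eq_false, false_and, if_false,
      not_false_eq_true, true_and, Finset.sum_const, zero_add, Finset.card_univ, Fintype.card_fin,
      nsmul_eq_mul]
    rw [Finset.card_filter]
    push_cast
    rw [Finset.sum_mul]
    refine Finset.sum_congr rfl fun i _ => ?_
    split_ifs <;> simp

lemma card_seeded_le (T : Finset (Fin n × Fin (t + 1))) :
    (Finset.univ.filter fun i : Fin n => (i, (0 : Fin (t + 1))) ∈ T).card ≤ T.card :=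
  Finset.card_le_card_of_injOn (fun i => (i, 0)) (fun i hi => by simpa using hi)
    (fun i _ j _ h => congrArg Prod.fst h)

lemma spread_le (θ : (Fin n × Fin (t + 1)) × (Fin n × Fin (t + 1)) → ℝ)
    (T : Finset (Fin n × Fin (t + 1))) (b : ℝ) (hb : 0 ≤ b)
    (h : ∀ e ∈ starEdges n t, e.1 ∈ T → θ e ≤ b) :
    spread (starEdges n t) θ T ≤ T.card * (1 + t * b) := by
  have h1 : spread (starEdges n t) θ T ≤ T.card +
      (Finset.univ.filter fun i : Fin n => (i, (0 : Fin (t + 1))) ∈ T).card * (t * b) := by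
    rw [← sum_weights, spread_eq]
    refine Finset.sum_le_sum fun v _ => ?_
    split_ifs with h1 h2 h2
    · linarith
    · linarith
    · linarith [h ((v.1, 0), v) (mem_starEdges.2 ⟨rfl, h2.1, rfl⟩) h2.2]
    · simp
  have h2 : ((Finset.univ.filter fun i : Fin n => (i, (0 : Fin (t + 1))) ∈ T).card : ℝ) * (t * b)
      ≤ T.card * (t * b) :=
    mul_le_mul_of_nonneg_right (Nat.cast_le.2 (card_seeded_le T)) (by positivity)
  linarith

/-- The set of centers of the stars indexed by `A`. -/
def centers (t : ℕ) (A : Finset (Fin n)) : Finset (Fin n × Fin (t + 1)) :=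
  A.image fun i => (i, 0)

lemma mem_centers {A : Finset (Fin n)} {v : Fin n × Fin (t + 1)} :
    v ∈ centers t A ↔ v.1 ∈ A ∧ v.2 = 0 := by
  rcases v with ⟨i, j⟩
  simp [centers, eq_comm]

lemma card_centers (A : Finset (Fin n)) : (centers t A).card = A.card :=
  Finset.card_image_of_injective _ fun _ _ h => congrArg Prod.fst h

lemma le_spread_centers (θ : (Fin n × Fin (t + 1)) × (Fin n × Fin (t + 1)) → ℝ)
    (A : Finset (Fin n)) (a : ℝ)
    (h : ∀ e ∈ starEdges n t, e.1.1 ∈ A → a ≤ θ e) :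
    A.card * (1 + t * a) ≤ spread (starEdges n t) θ (centers t A) := by
  have h0 : (Finset.univ.filter fun i : Fin n => (i, (0 : Fin (t + 1))) ∈ centers t A) = A := by
    ext i
    simp [mem_centers]
  have h1 := sum_weights (centers t A) a
  rw [h0, card_centers] at h1
  have h2 : (A.card : ℝ) * (1 + t * a) = A.card + A.card * (t * a) := by ring
  rw [h2, ← h1, spread_eq]
  refine Finset.sum_le_sum fun v _ => ?_
  split_ifs with h1 h2 h2
  · exact absurd (mem_centers.1 h1).2 h2.1
  · simp
  · linarith [h ((v.1, 0), v) (mem_starEdges.2 ⟨rfl, h2.1, rfl⟩) (mem_centers.1 h2.2).1]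
  · simp

lemma spread_nonneg (θ : (Fin n × Fin (t + 1)) × (Fin n × Fin (t + 1)) → ℝ)
    (T : Finset (Fin n × Fin (t + 1))) (h : ∀ e ∈ starEdges n t, 0 ≤ θ e) :
    0 ≤ spread (starEdges n t) θ T := by
  rw [spread_eq]
  refine Finset.sum_nonneg fun v _ => ?_
  split_ifs with _ h2
  · exact zero_le_one
  · exact h _ (mem_starEdges.2 ⟨rfl, h2.1, rfl⟩)
  · exact le_rfl

end Stars

/-! ### The optimum and the robust ratio -/

section OPT

variable {V : Type*} [Fintype V] [DecidableEq V] (E : Finset (V × V)) (θ : V × V → ℝ)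

/-- The supremum defining `OPT` is over a finite set, so it bounds each of its elements. -/
lemma spread_le_OPT (k : ℕ) (T : Finset V) (hT : T.card = k) : spread E θ T ≤ OPT E θ k := by
  refine le_csSup (Set.Finite.bddAbove ?_) ⟨T, hT, rfl⟩
  refine (Set.finite_range (spread E θ)).subset ?_
  rintro x ⟨T, _, rfl⟩
  exact ⟨T, rfl⟩

lemma OPT_le (k : ℕ) (T₀ : Finset V) (hT₀ : T₀.card = k) (M : ℝ)
    (h : ∀ T : Finset V, T.card = k → spread E θ T ≤ M) : OPT E θ k ≤ M := by
  refine csSup_le ⟨_, T₀, hT₀, rfl⟩ ?_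
  rintro x ⟨T, hT, rfl⟩
  exact h T hT

end OPT

/-- The adversary puts `l` on the stars touched by `T` and `r` on all others. -/
lemma robustRatio_le (t k : ℕ) (hk : 1 ≤ k) (l r : ℝ) (h0l : 0 ≤ l) (hlr : l ≤ r)
    (T : Finset (Fin (2 * k) × Fin (t + 1))) (hT : T.card = k) :
    robustRatio (starEdges (2 * k) t) (fun _ => l) (fun _ => r) k T ≤
      (1 + t * l) / (1 + t * r) := by
  have hr0 : 0 ≤ r := h0l.trans hlr
  have hk0 : (0 : ℝ) < k := Nat.cast_pos.2 hk
  -- Since `T` touches at most `k` stars, `k` untouched ones remain.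
  obtain ⟨A, hA, hAk⟩ : ∃ A ⊆ (T.image Prod.fst)ᶜ, A.card = k := by
    refine Finset.exists_subset_card_eq ?_
    have h1 : (T.image Prod.fst).card ≤ T.card := Finset.card_image_le
    rw [Finset.card_compl, Fintype.card_fin]
    omega
  let θ : (Fin (2 * k) × Fin (t + 1)) × (Fin (2 * k) × Fin (t + 1)) → ℝ :=
    fun e => if e.1.1 ∈ T.image Prod.fst then l else r
  have h1 : spread (starEdges (2 * k) t) θ T ≤ k * (1 + t * l) := by
    have := spread_le θ T l h0l fun e _ he => ?_
    · rwa [hT] at this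
    exact (if_pos (Finset.mem_image_of_mem Prod.fst he)).le
  have h2 : k * (1 + t * r) ≤ OPT (starEdges (2 * k) t) θ k := by
    refine le_trans ?_ (spread_le_OPT _ θ k (centers t A) (by rw [card_centers, hAk]))
    have := le_spread_centers θ A r fun e _ he => ?_
    · rwa [hAk] at this
    exact (if_neg (Finset.mem_compl.1 (hA he))).ge
  have h3 : robustRatio (starEdges (2 * k) t) (fun _ => l) (fun _ => r) k T ≤
      spread (starEdges (2 * k) t) θ T / OPT (starEdges (2 * k) t) θ k := by
    refine csInf_le ⟨0, ?_⟩ ⟨θ, fun e _ => ?_, rfl⟩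
    · rintro x ⟨η, hη, rfl⟩
      have hη0 := fun T' => spread_nonneg η T' fun e he => h0l.trans (hη e he).1
      exact div_nonneg (hη0 T) ((hη0 T).trans (spread_le_OPT _ η k T hT))
    · simp only [θ]
      split_ifs
      · exact ⟨le_rfl, hlr⟩
      · exact ⟨hlr, le_rfl⟩
  refine h3.trans ((div_le_div₀ (by positivity) h1 (by positivity) h2).trans_eq ?_)
  rw [mul_div_mul_left _ _ hk0.ne']

/-- Any `k` centers guarantee the ratio, because no `k` seeds spread beyond `k * (1 + t * r)`. -/
lemma le_robustRatio_centers (t k : ℕ) (hk : 1 ≤ k) (l r : ℝ) (h0l : 0 ≤ l) (hlr : l ≤ r)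
    (A : Finset (Fin (2 * k))) (hA : A.card = k) :
    (1 + t * l) / (1 + t * r) ≤
      robustRatio (starEdges (2 * k) t) (fun _ => l) (fun _ => r) k (centers t A) := by
  have hr0 : 0 ≤ r := h0l.trans hlr
  have hk0 : (0 : ℝ) < k := Nat.cast_pos.2 hk
  have hc : (centers t A).card = k := by rw [card_centers, hA]
  refine le_csInf ⟨_, fun _ => l, fun _ _ => ⟨le_rfl, hlr⟩, rfl⟩ ?_
  rintro x ⟨θ, hθ, rfl⟩
  have h1 : k * (1 + t * l) ≤ spread (starEdges (2 * k) t) θ (centers t A) := by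
    have := le_spread_centers θ A l fun e he _ => (hθ e he).1
    rwa [hA] at this
  have h2 : OPT (starEdges (2 * k) t) θ k ≤ k * (1 + t * r) := by
    refine OPT_le _ θ k _ hc _ fun T hT => ?_
    have := spread_le θ T r hr0 fun e he _ => (hθ e he).2
    rwa [hT] at this
  have hpos : 0 < k * (1 + t * l) := by positivity
  have h3 := spread_le_OPT (starEdges (2 * k) t) θ k _ hc
  rw [← mul_div_mul_left _ _ hk0.ne']
  exact div_le_div₀ (hpos.le.trans h1) h1 (hpos.trans_le (h1.trans h3)) h2

/-- Example 1, disjoint stars: `V = Fin (2k) × Fin (t+1)`, node `(i,0)` is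
the center of star `i`, and the edges go from each center to the leaves of its own star.
With the interval `[l,r]` on every edge, the set `S` of the first `k` star centers
satisfies `g(Θ,S) = (1+tl)/(1+tr)`, and this is optimal among all size-`k` seed sets. -/
theorem disjoint_stars_example (t k : ℕ) (hk : 1 ≤ k)
    (l r : ℝ) (h0l : 0 ≤ l) (hlr : l ≤ r) (hr1 : r ≤ 1)
    (E : Finset ((Fin (2 * k) × Fin (t + 1)) × (Fin (2 * k) × Fin (t + 1))))
    (hE : E = Finset.univ.filter
      (fun e : (Fin (2 * k) × Fin (t + 1)) × (Fin (2 * k) × Fin (t + 1)) =>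
        e.1.2 = 0 ∧ e.2.2 ≠ 0 ∧ e.2.1 = e.1.1))
    (S : Finset (Fin (2 * k) × Fin (t + 1)))
    (hS : S = (Finset.univ.filter (fun i : Fin (2 * k) => (i : ℕ) < k)).image
      (fun i => (i, (0 : Fin (t + 1))))) :
    robustRatio E (fun _ => l) (fun _ => r) k S = (1 + t * l) / (1 + t * r) ∧
    ∀ S' : Finset (Fin (2 * k) × Fin (t + 1)), S'.card = k →
      robustRatio E (fun _ => l) (fun _ => r) k S' ≤ (1 + t * l) / (1 + t * r) := by
  have hE' : E = starEdges (2 * k) t := hE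
  have hS' : S = centers t (Finset.univ.filter fun i : Fin (2 * k) => (i : ℕ) < k) := hS
  have hcard : (Finset.univ.filter fun i : Fin (2 * k) => (i : ℕ) < k).card = k := by
    rw [Fin.card_filter_val_lt]
    omega
  have hup := robustRatio_le t k hk l r h0l hlr
  rw [hE', hS']
  refine ⟨le_antisymm (hup _ (by rw [card_centers, hcard])) ?_, hup⟩
  exact le_robustRatio_centers t k hk l r h0l hlr _ hcard
end

section
/- (Deterministic core of Theorem 6, setting 1.) Let Θ=×_{e∈E}[l_e,r_e] be a parameter space with minimum vector θ⁻ and maximum vector θ⁺, let k ≥ 1 and 0 ≤ ε ≤ 1, and suppose r_e − l_e ≤ kε/(m·n) for every edge e ∈ E, where n=|V| and m=|E|. Then every seed set S with |S| = k satisfies σ_{θ⁻}(S) ≥ (1−ε)·σ_{θ⁺}(S). -/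
/-- The expectation of `f L` when `L ⊆ E` is the random live-edge graph with edge
probabilities `θ`. -/
noncomputable def liveExp {V : Type*} [DecidableEq V]
    (E : Finset (V × V)) (θ : V × V → ℝ) (f : Finset (V × V) → ℝ) : ℝ :=
  ∑ L ∈ E.powerset, liveProb E θ L * f L

/-- The law of total expectation, conditioning on whether the edge `a` is live. -/
lemma liveExp_insert {V : Type*} [DecidableEq V] {E : Finset (V × V)} {a : V × V}
    (ha : a ∉ E) (θ : V × V → ℝ) (f : Finset (V × V) → ℝ) :
    liveExp (insert a E) θ f =
      (1 - θ a) * liveExp E θ f + θ a * liveExp E θ (fun L => f (insert a L)) := by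
  unfold liveExp
  rw [Finset.sum_powerset_insert ha, Finset.mul_sum, Finset.mul_sum]
  congr 1
  · refine Finset.sum_congr rfl fun L hL => ?_
    have haL : a ∉ L := fun h => ha (Finset.mem_powerset.1 hL h)
    unfold liveProb
    rw [Finset.insert_sdiff_of_notMem _ haL,
      Finset.prod_insert (fun h => ha (Finset.mem_sdiff.1 h).1)]
    ring
  · refine Finset.sum_congr rfl fun L hL => ?_
    have haL : a ∉ L := fun h => ha (Finset.mem_powerset.1 hL h)
    have hsd : insert a E \ insert a L = E \ L := by
      ext x
      simp only [Finset.mem_sdiff, Finset.mem_insert]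
      grind
    unfold liveProb
    rw [hsd, Finset.prod_insert haL]
    ring

lemma liveExp_mem_Icc {V : Type*} [DecidableEq V] {E : Finset (V × V)} {θ : V × V → ℝ}
    (hθ : ∀ e ∈ E, 0 ≤ θ e ∧ θ e ≤ 1) {A B : ℝ} {f : Finset (V × V) → ℝ}
    (hf : ∀ L, A ≤ f L ∧ f L ≤ B) :
    A ≤ liveExp E θ f ∧ liveExp E θ f ≤ B := by
  induction E using Finset.induction_on generalizing f with
  | empty => simpa [liveExp, liveProb] using hf ∅
  | insert a E ha ih =>
    rw [liveExp_insert ha]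
    have hE : ∀ e ∈ E, 0 ≤ θ e ∧ θ e ≤ 1 := fun e he => hθ e (Finset.mem_insert_of_mem he)
    obtain ⟨h0, h1⟩ := hθ a (Finset.mem_insert_self a E)
    obtain ⟨p, q⟩ := ih hE hf
    obtain ⟨p', q'⟩ := ih hE (f := fun L => f (insert a L)) (fun L => hf _)
    constructor <;> nlinarith

/-- The expectation is Lipschitz in the edge probabilities: changing the probabilities one edge
at a time, each change contributes at most its width times the range of `f`. -/
lemma liveExp_sub_le {V : Type*} [DecidableEq V] {E : Finset (V × V)} {l r : V × V → ℝ}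
    (hlr : ∀ e ∈ E, 0 ≤ l e ∧ l e ≤ r e ∧ r e ≤ 1) {B : ℝ} {f : Finset (V × V) → ℝ}
    (hf : ∀ L, 0 ≤ f L ∧ f L ≤ B) :
    liveExp E r f - liveExp E l f ≤ B * ∑ e ∈ E, (r e - l e) := by
  induction E using Finset.induction_on generalizing f with
  | empty => simp [liveExp, liveProb]
  | insert a E ha ih =>
    rw [liveExp_insert ha, liveExp_insert ha, Finset.sum_insert ha]
    have hE : ∀ e ∈ E, 0 ≤ l e ∧ l e ≤ r e ∧ r e ≤ 1 :=
      fun e he => hlr e (Finset.mem_insert_of_mem he)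
    have hl : ∀ e ∈ E, 0 ≤ l e ∧ l e ≤ 1 :=
      fun e he => ⟨(hE e he).1, (hE e he).2.1.trans (hE e he).2.2⟩
    obtain ⟨h0, h1, h2⟩ := hlr a (Finset.mem_insert_self a E)
    have d := ih hE hf
    have d' := ih hE (f := fun L => f (insert a L)) (fun L => hf _)
    have p := (liveExp_mem_Icc hl hf).1
    have q := (liveExp_mem_Icc hl (f := fun L => f (insert a L)) (fun L => hf _)).2
    have e1 := mul_le_mul_of_nonneg_left d (sub_nonneg.2 h2)
    have e2 := mul_le_mul_of_nonneg_left d' (h0.trans h1)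
    have e3 := mul_le_mul_of_nonneg_left (sub_le_sub q p) (sub_nonneg.2 h1)
    linear_combination e1 + e2 + e3

lemma subset_reachSet {V : Type*} [Fintype V] [DecidableEq V]
    (L : Finset (V × V)) (S : Finset V) : S ⊆ reachSet L S := by
  intro v hv
  simp only [reachSet, Finset.mem_filter, Finset.mem_univ, true_and]
  exact ⟨v, hv, Relation.ReflTransGen.refl⟩

/-- deterministic core of Theorem 6, setting 1: if every interval has
width at most `kε/(mn)`, then every size-`k` seed set `S` satisfies
`σ_{θ⁻}(S) ≥ (1−ε)·σ_{θ⁺}(S)`. -/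
theorem additive_width_spread_ratio {V : Type*} [Fintype V] [DecidableEq V]
    (E : Finset (V × V)) (n m : ℕ) (hn : n = Fintype.card V) (hm : m = E.card)
    (l r : V × V → ℝ)
    (hlr : ∀ e ∈ E, 0 ≤ l e ∧ l e ≤ r e ∧ r e ≤ 1)
    (k : ℕ) (hk : 1 ≤ k) (ε : ℝ) (hε0 : 0 ≤ ε) (hε1 : ε ≤ 1)
    (hwidth : ∀ e ∈ E, r e - l e ≤ k * ε / (m * n))
    (S : Finset V) (hS : S.card = k) :
    (1 - ε) * spread E r S ≤ spread E l S := by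
  have hf : ∀ L, (k : ℝ) ≤ ((reachSet L S).card : ℝ) ∧ ((reachSet L S).card : ℝ) ≤ n := by
    intro L
    subst hn hS
    exact ⟨by exact_mod_cast Finset.card_le_card (subset_reachSet L S),
      by exact_mod_cast Finset.card_le_univ _⟩
  have hlow : (k : ℝ) ≤ spread E r S :=
    (liveExp_mem_Icc (fun e he => ⟨(hlr e he).1.trans (hlr e he).2.1, (hlr e he).2.2⟩) hf).1
  have hdiff : spread E r S - spread E l S ≤ n * ∑ e ∈ E, (r e - l e) :=
    liveExp_sub_le hlr (fun L => ⟨Nat.cast_nonneg _, (hf L).2⟩)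
  have hsum : ∑ e ∈ E, (r e - l e) ≤ m * (k * ε / (m * n)) := by
    simpa [hm] using Finset.sum_le_sum hwidth
  have hn0 : (0 : ℝ) < n := by
    have h1 : (1 : ℝ) ≤ k := by exact_mod_cast hk
    linarith [hf ∅]
  have hke : (0 : ℝ) ≤ k * ε := by positivity
  have hloss : (n : ℝ) * (m * (k * ε / (m * n))) ≤ k * ε := by
    -- without edges the division by `m` is by zero, and the left-hand side vanishes
    rcases Nat.eq_zero_or_pos m with h | h
    · simpa [h] using hke
    · have : (0 : ℝ) < m := by exact_mod_cast h
      exact le_of_eq (by field_simp)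
  have h1 := mul_le_mul_of_nonneg_left hsum hn0.le
  have h2 := mul_le_mul_of_nonneg_left hlow hε0
  linarith
end
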